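/- arXiv:math/0505216 — 3 statements merged into one kernel-verified Lean document; each statement's English description precedes it below -/
import Mathlib

section
/- Let θ ∈ (0, 1/2) and 0 < δ < θ. If x₁, …, x_k ∈ [0,1] satisfy |x_i − θ| ≥ δ for every i, and α₁, …, α_k ≥ 0 satisfy Σ_i α_i = 1 and Σ_i α_i x_i = θ, then Σ_i α_i (√(x_i) + √(1−x_i))² ≤ (√θ + √(1−θ))² − 2δ². -/
/-!
Since `(√x + √(1-x))² = 1 + 2 √(x(1-x))`, it suffices to bound the concave function
`g x = √(x(1-x))`, whose second derivative is at most `-2`. The resulting strong concavity at `θ`,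
`g x ≤ g θ + g' θ * (x - θ) - (x - θ)²` (`tangent_bound`), is averaged with the weights `α i`:
the linear term vanishes because the mean is `θ`, and every quadratic term is at least `δ²`.
-/

open Real

lemma sq_sqrt_add_sqrt {x : ℝ} (hx : x ∈ Set.Icc (0 : ℝ) 1) :
    (√x + √(1 - x)) ^ 2 = 1 + 2 * √(x * (1 - x)) := by
  rw [Real.sqrt_mul hx.1, add_sq, Real.sq_sqrt hx.1, Real.sq_sqrt (by linarith [hx.2])]
  ring

/-- With `s = g x`, `t = g θ`, `d = x - θ`, the gap between the two sides multiplied by `2t` is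
`(s - t)² + (1 - 2t) d²`, and `t ≤ 1/2`. -/
lemma tangent_bound {θ x : ℝ} (hθ : θ ∈ Set.Ioo (0 : ℝ) (1 / 2)) (hx : x ∈ Set.Icc (0 : ℝ) 1) :
    √(x * (1 - x)) ≤ √(θ * (1 - θ))
      + (1 - 2 * θ) / (2 * √(θ * (1 - θ))) * (x - θ) - (x - θ) ^ 2 := by
  obtain ⟨h0, h1⟩ := hθ
  have hpos : 0 < θ * (1 - θ) := mul_pos h0 (by linarith)
  have hs := Real.sq_sqrt (mul_nonneg hx.1 (sub_nonneg.2 hx.2))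
  have ht := Real.sq_sqrt hpos.le
  have htpos := Real.sqrt_pos.2 hpos
  have hthalf : √(θ * (1 - θ)) ≤ 1 / 2 :=
    Real.sqrt_le_iff.2 ⟨by norm_num, by nlinarith [sq_nonneg (θ - 1 / 2)]⟩
  set s := √(x * (1 - x))
  set t := √(θ * (1 - θ))
  have key : t + (1 - 2 * θ) / (2 * t) * (x - θ) - (x - θ) ^ 2 - s
      = ((s - t) ^ 2 + (1 - 2 * t) * (x - θ) ^ 2) / (2 * t) := by
    field_simp
    linear_combination ht - hs
  have : 0 ≤ ((s - t) ^ 2 + (1 - 2 * t) * (x - θ) ^ 2) / (2 * t) := by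
    have : 0 ≤ 1 - 2 * t := by linarith
    positivity
  linarith

theorem stmt5 (θ δ : ℝ) (hθ : θ ∈ Set.Ioo (0 : ℝ) (1 / 2)) (hδ0 : 0 < δ) (hδθ : δ < θ)
    (k : ℕ) (x α : Fin k → ℝ)
    (hx : ∀ i, x i ∈ Set.Icc (0 : ℝ) 1) (hfar : ∀ i, δ ≤ |x i - θ|)
    (hα : ∀ i, 0 ≤ α i) (hsum : ∑ i, α i = 1) (hmean : ∑ i, α i * x i = θ) :
    ∑ i, α i * (Real.sqrt (x i) + Real.sqrt (1 - x i)) ^ 2 ≤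
      (Real.sqrt θ + Real.sqrt (1 - θ)) ^ 2 - 2 * δ ^ 2 := by
  rw [sq_sqrt_add_sqrt ⟨hθ.1.le, by linarith [hθ.2]⟩]
  set t := √(θ * (1 - θ)) with ht
  set m := (1 - 2 * θ) / (2 * t) with hm
  have hpt : ∀ i, α i * (√(x i) + √(1 - x i)) ^ 2
      ≤ α i * (1 + 2 * t - 2 * δ ^ 2 - 2 * m * θ) + 2 * m * (α i * x i) := by
    intro i
    have h1 := tangent_bound hθ (hx i)
    rw [← ht, ← hm] at h1
    have h2 : δ ^ 2 ≤ (x i - θ) ^ 2 := by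
      rw [← sq_abs (x i - θ)]
      exact pow_le_pow_left₀ hδ0.le (hfar i) 2
    rw [sq_sqrt_add_sqrt (hx i)]
    have h3 : 1 + 2 * √(x i * (1 - x i))
        ≤ 1 + 2 * t - 2 * δ ^ 2 - 2 * m * θ + 2 * m * x i := by linarith
    linarith [mul_le_mul_of_nonneg_left h3 (hα i)]
  refine (Finset.sum_le_sum fun i _ => hpt i).trans (le_of_eq ?_)
  rw [Finset.sum_add_distrib, ← Finset.sum_mul, ← Finset.mul_sum, hsum, hmean]
  ring
end

section
/- Let 0 ≤ ρ < λ ≤ 1, let g(r) = (1−r)²/4, and let U₀(x) = ρx for x ≥ 0 and U₀(x) = λx for x < 0. Then for every t > 0 and every x ∈ ℝ, the Hopf–Lax value U_t(x) = sup_{y ∈ ℝ} { U₀(y) − t·g((x−y)/t) } is given explicitly by: U_t(x) = λx − tλ(1−λ) if x ≤ (1−2λ)t; U_t(x) = −(t−x)²/(4t) if (1−2λ)t ≤ x ≤ (1−2ρ)t; and U_t(x) = ρx − tρ(1−ρ) if x ≥ (1−2ρ)t. In particular the supremum is finite and, on the middle interval, the spatial derivative of U_t equals the rarefaction-fan profile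 (t−x)/(2t). -/
/-!
The datum is concave: `U₀(y) = min (ρ y) (λ y)`, so `U₀(y) ≤ a y` for every slope `a ∈ [ρ, λ]`.
For a linear datum of slope `a` the Hopf–Lax functional is a quadratic in `y`; completing the square
gives the maximum `a x - t a (1 - a)`, attained at the foot `y = x - (1 - 2a) t` of the
characteristic. If `U₀` agrees with `a y` at that foot, the supremum for `U₀` is the same
(`isLUB_hopfLax_of_slope`). The three regimes are the slopes `a = λ` (foot `≤ 0`),
`a = (t - x) / (2t)` (foot `0`) and `a = ρ` (foot `≥ 0`). The fan derivative follows since the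
middle formula holds on a neighbourhood of each interior point.
-/

open Real

/-- The Legendre conjugate `g(r) = (1−r)²/4` of the TASEP flux `G(u) = u(1−u)`. -/
noncomputable def legendreG (r : ℝ) : ℝ := (1 - r) ^ 2 / 4

/-- Antiderivative of the decreasing Riemann datum: `U₀(x) = ρx` for `x ≥ 0`, `λx` for `x < 0`. -/
noncomputable def riemannU0 (lam ρ x : ℝ) : ℝ := if 0 ≤ x then ρ * x else lam * x

lemma hopfLax_linear_eq (a t x y : ℝ) (ht : 0 < t) :
    a * y - t * legendreG ((x - y) / t) =
      a * x - t * a * (1 - a) - (y - (x - (1 - 2 * a) * t)) ^ 2 / (4 * t) := by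
  unfold legendreG
  field_simp
  ring

lemma riemannU0_le_slope {lam ρ a : ℝ} (h₁ : ρ ≤ a) (h₂ : a ≤ lam) (y : ℝ) :
    riemannU0 lam ρ y ≤ a * y := by
  unfold riemannU0
  split_ifs with hy
  · exact mul_le_mul_of_nonneg_right h₁ hy
  · exact mul_le_mul_of_nonpos_right h₂ (not_le.mp hy).le

/-- If the slope-`a` line dominates the datum and touches it at the foot `x - (1 - 2a) t` of the
characteristic of slope `a` through `(t, x)`, it determines the Hopf–Lax value there. -/
lemma isLUB_hopfLax_of_slope {lam ρ a t x : ℝ} (ht : 0 < t) (h₁ : ρ ≤ a) (h₂ : a ≤ lam)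
    (hfoot : riemannU0 lam ρ (x - (1 - 2 * a) * t) = a * (x - (1 - 2 * a) * t)) :
    IsLUB {z : ℝ | ∃ y : ℝ, z = riemannU0 lam ρ y - t * legendreG ((x - y) / t)}
      (a * x - t * a * (1 - a)) := by
  refine IsGreatest.isLUB ⟨⟨x - (1 - 2 * a) * t, ?_⟩, ?_⟩
  · rw [hfoot, hopfLax_linear_eq a t x _ ht]
    simp
  · rintro z ⟨y, rfl⟩
    have hle := riemannU0_le_slope h₁ h₂ y
    have heq := hopfLax_linear_eq a t x y ht
    have hsq : 0 ≤ (y - (x - (1 - 2 * a) * t)) ^ 2 / (4 * t) := by positivity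
    linarith

lemma isLUB_hopfLax_fan {lam ρ t x : ℝ} (ht : 0 < t)
    (h₁ : (1 - 2 * lam) * t ≤ x) (h₂ : x ≤ (1 - 2 * ρ) * t) :
    IsLUB {z : ℝ | ∃ y : ℝ, z = riemannU0 lam ρ y - t * legendreG ((x - y) / t)}
      (-(t - x) ^ 2 / (4 * t)) := by
  have hfoot : x - (1 - 2 * ((t - x) / (2 * t))) * t = 0 := by
    field_simp
    ring
  have hval : -(t - x) ^ 2 / (4 * t) =
      (t - x) / (2 * t) * x - t * ((t - x) / (2 * t)) * (1 - (t - x) / (2 * t)) := by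
    field_simp
    ring
  rw [hval]
  refine isLUB_hopfLax_of_slope ht ?_ ?_ ?_
  · rw [le_div_iff₀ (by positivity)]
    linarith
  · rw [div_le_iff₀ (by positivity)]
    linarith
  · rw [hfoot]
    simp [riemannU0]

theorem stmt14 (lam ρ : ℝ) (hρ : 0 ≤ ρ) (hρlam : ρ < lam) (hlam : lam ≤ 1)
    (t : ℝ) (ht : 0 < t) :
    (∀ x : ℝ, x ≤ (1 - 2 * lam) * t →
      IsLUB {z : ℝ | ∃ y : ℝ, z = riemannU0 lam ρ y - t * legendreG ((x - y) / t)}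
        (lam * x - t * lam * (1 - lam))) ∧
    (∀ x : ℝ, (1 - 2 * lam) * t ≤ x → x ≤ (1 - 2 * ρ) * t →
      IsLUB {z : ℝ | ∃ y : ℝ, z = riemannU0 lam ρ y - t * legendreG ((x - y) / t)}
        (-(t - x) ^ 2 / (4 * t))) ∧
    (∀ x : ℝ, (1 - 2 * ρ) * t ≤ x →
      IsLUB {z : ℝ | ∃ y : ℝ, z = riemannU0 lam ρ y - t * legendreG ((x - y) / t)}
        (ρ * x - t * ρ * (1 - ρ))) ∧
    (∀ x ∈ Set.Ioo ((1 - 2 * lam) * t) ((1 - 2 * ρ) * t),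
      deriv (fun x' : ℝ =>
        sSup {z : ℝ | ∃ y : ℝ, z = riemannU0 lam ρ y - t * legendreG ((x' - y) / t)}) x =
        (t - x) / (2 * t)) := by
  refine ⟨fun x hx => ?_, fun x h₁ h₂ => isLUB_hopfLax_fan ht h₁ h₂, fun x hx => ?_,
    fun x hx => ?_⟩
  · refine isLUB_hopfLax_of_slope ht hρlam.le le_rfl ?_
    unfold riemannU0
    split_ifs with h
    -- A nonnegative foot can only be `0`, where both branches of the datum vanish.
    · have h0 : x - (1 - 2 * lam) * t = 0 := by linarith
      rw [h0, mul_zero, mul_zero]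
    · rfl
  · refine isLUB_hopfLax_of_slope ht le_rfl hρlam.le ?_
    exact if_pos (sub_nonneg.mpr hx)
  · have hev : (fun x' : ℝ =>
        sSup {z : ℝ | ∃ y : ℝ, z = riemannU0 lam ρ y - t * legendreG ((x' - y) / t)})
        =ᶠ[nhds x] fun x' => -(t - x') ^ 2 / (4 * t) := by
      filter_upwards [Ioo_mem_nhds hx.1 hx.2] with x' hx'
      have hfan := isLUB_hopfLax_fan ht hx'.1.le hx'.2.le
      exact hfan.csSup_eq ⟨_, 0, rfl⟩
    rw [hev.deriv_eq]
    have hd : HasDerivAt (fun x' : ℝ => -(t - x') ^ 2 / (4 * t))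
        (-(2 * (t - x) * (-1)) / (4 * t)) x := by
      have h := ((((hasDerivAt_id x).const_sub t).pow 2).neg).div_const (4 * t)
      simpa using h
    rw [hd.deriv]
    field_simp
    ring
end

section
/- Let 0 ≤ ρ < λ ≤ 1, let 0 < δ < 1/10 with δ < λ − ρ, and let m be a positive integer with 1/m < δ/10. Let x ∈ (1−2λ+δ, 1−2ρ−δ) and s ∈ [1 + 1/(2m), 1 + 1/m]. Then the supremum U_s(xs) = sup_{v ∈ ℝ} { U₁(v) − (s−1)·g((xs−v)/(s−1)) } is attained at v = x, so that U_s(xs) = U₁(x) − (s−1)·g(x); moreover, for every v with |v − sx| < 2(s−1), one has U₁(v) − (s−1)·g((xs−v)/(s−1)) ≤ U_s(xs) − (v−x)². -/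
/-!
The function `U₁` is concave, so it lies below its tangent at the point `x` of the rarefaction fan,
where the slope is `(1 - x) / 2` (`hopfLaxU1_le_tangent`). On the other side, expanding the square
shows that `(s - 1) g((xs - v) / (s - 1))` equals its own tangent at `v = x`, of the same slope, plus
the exact remainder `(v - x)² / (4 (s - 1))` (`legendreG_expand`). The first-order terms cancel, so
the objective at `v` falls short of its value at `x` by at least `(v - x)² / (4 (s - 1))`. Since
`s - 1 ≤ 1 / m < 1 / 100`, this is at least `(v - x)²`, for every real `v`; both claims follow.
-/

open Real

/-- The time-1 Hopf–Lax solution `U₁` for the decreasing Riemann datum with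
densities `λ` (left) and `ρ` (right). -/
noncomputable def hopfLaxU1 (lam ρ y : ℝ) : ℝ :=
  if y ≤ 1 - 2 * lam then lam * y - lam * (1 - lam)
  else if y ≤ 1 - 2 * ρ then -(1 - y) ^ 2 / 4
  else ρ * y - ρ * (1 - ρ)

lemma hopfLaxU1_of_mem_fan {lam ρ x : ℝ} (h1 : 1 - 2 * lam < x) (h2 : x ≤ 1 - 2 * ρ) :
    hopfLaxU1 lam ρ x = -(1 - x) ^ 2 / 4 := by
  rw [hopfLaxU1, if_neg (not_le.mpr h1), if_pos h2]

lemma hopfLaxU1_le_tangent {lam ρ x : ℝ} (h1 : 1 - 2 * lam < x) (h2 : x ≤ 1 - 2 * ρ) (v : ℝ) :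
    hopfLaxU1 lam ρ v ≤ hopfLaxU1 lam ρ x + (1 - x) / 2 * (v - x) := by
  rw [hopfLaxU1_of_mem_fan h1 h2, hopfLaxU1]
  -- With `p = (1 - x) / 2`, the tangent is `p v - p (1 - p)`; on an outer piece of slope `q` the
  -- gap to it is `(q - p) (1 - q - p - v)`.
  split_ifs with hv hv'
  · nlinarith [mul_nonneg (show 0 ≤ lam - (1 - x) / 2 by linarith)
      (show 0 ≤ 1 - lam - (1 - x) / 2 - v by linarith)]
  · nlinarith [sq_nonneg (v - x)]
  · nlinarith [mul_nonneg (show 0 ≤ (1 - x) / 2 - ρ by linarith)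
      (show 0 ≤ v - (1 - ρ - (1 - x) / 2) by linarith)]

lemma legendreG_expand {s : ℝ} (hs : s - 1 ≠ 0) (x v : ℝ) :
    (s - 1) * legendreG ((x * s - v) / (s - 1)) =
      (s - 1) * legendreG x + (1 - x) / 2 * (v - x) + (v - x) ^ 2 / (4 * (s - 1)) := by
  unfold legendreG
  field_simp
  ring

theorem stmt15 (lam ρ : ℝ) (hρ : 0 ≤ ρ) (hρlam : ρ < lam) (hlam : lam ≤ 1)
    (δ : ℝ) (hδ0 : 0 < δ) (hδ1 : δ < 1 / 10) (hδ2 : δ < lam - ρ)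
    (m : ℕ) (hm : 0 < m) (hmδ : 1 / (m : ℝ) < δ / 10)
    (x : ℝ) (hx : x ∈ Set.Ioo (1 - 2 * lam + δ) (1 - 2 * ρ - δ))
    (s : ℝ) (hs : s ∈ Set.Icc (1 + 1 / (2 * (m : ℝ))) (1 + 1 / (m : ℝ))) :
    IsGreatest {z : ℝ | ∃ v : ℝ, z = hopfLaxU1 lam ρ v - (s - 1) * legendreG ((x * s - v) / (s - 1))}
      (hopfLaxU1 lam ρ x - (s - 1) * legendreG x) ∧
    ∀ v : ℝ, |v - s * x| < 2 * (s - 1) →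
      hopfLaxU1 lam ρ v - (s - 1) * legendreG ((x * s - v) / (s - 1)) ≤
        (hopfLaxU1 lam ρ x - (s - 1) * legendreG x) - (v - x) ^ 2 := by
  obtain ⟨hx1, hx2⟩ := hx
  obtain ⟨hs1, hs2⟩ := hs
  have hm' : (0 : ℝ) < m := by exact_mod_cast hm
  have hpos : 0 < s - 1 := by
    have : 0 < 1 / (2 * (m : ℝ)) := by positivity
    linarith
  have key : ∀ v : ℝ, hopfLaxU1 lam ρ v - (s - 1) * legendreG ((x * s - v) / (s - 1)) ≤
      (hopfLaxU1 lam ρ x - (s - 1) * legendreG x) - (v - x) ^ 2 := by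
    intro v
    have htan := hopfLaxU1_le_tangent (lam := lam) (ρ := ρ) (x := x)
      (by linarith) (by linarith) v
    have hrem : (v - x) ^ 2 ≤ (v - x) ^ 2 / (4 * (s - 1)) := by
      rw [le_div_iff₀ (by positivity)]
      exact mul_le_of_le_one_right (sq_nonneg _) (by linarith)
    rw [legendreG_expand hpos.ne']
    linarith
  refine ⟨⟨⟨x, ?_⟩, ?_⟩, fun v _ => key v⟩
  · rw [legendreG_expand hpos.ne']
    simp
  · rintro z ⟨v, rfl⟩
    linarith [key v, sq_nonneg (v - x)]
end
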